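/- Let μ ∈ ℝ, σ > 0, and c > 0. Let f be the density of the square of a N(μ, σ²) Gaussian random variable, i.e., f(x) = [exp(−(x+μ²)/(2σ²)) / (2√(2πσ²x))] · [exp(μ√x/σ²) + exp(−μ√x/σ²)] for x > 0 and f(x) = 0 otherwise. Then ∫₀^∞ f(x) · Q(√(c·x/2)) dx = (1/π) ∫₀^{π/2} √(2 sin²θ / (2 sin²θ + c·σ²)) · exp(−c·μ² / (4 sin²θ + 2c·σ²)) dθ, where Q(x) = ∫_x^∞ (1/√(2π)) e^{−t²/2} dt is the Gaussian Q-function. -/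

import Mathlib

open MeasureTheory Real

/-- The Gaussian Q-function `Q(x) = ∫ₓ^∞ (1/√(2π)) e^{−t²/2} dt`. -/
noncomputable def gaussQ (x : ℝ) : ℝ :=
  ∫ t in Set.Ioi x, (1 / Real.sqrt (2 * π)) * Real.exp (-t ^ 2 / 2)

/-- The density of the square of a `N(μ, σ²)` Gaussian random variable. -/
noncomputable def squaredGaussianPDF (μ σ : ℝ) (x : ℝ) : ℝ :=
  if 0 < x then
    Real.exp (-(x + μ ^ 2) / (2 * σ ^ 2)) / (2 * Real.sqrt (2 * π * σ ^ 2 * x)) *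
      (Real.exp (μ * Real.sqrt x / σ ^ 2) + Real.exp (-(μ * Real.sqrt x) / σ ^ 2))
  else 0

/-!
Craig's formula `Q(x) = (1/π) ∫₀^{π/2} exp (-x² / (2 sin² θ)) dθ` turns the expectation of `Q(√X)`,
for a nonnegative random variable `X`, into an integral over `θ` of the moment generating function
of `X` at `-1 / (2 sin² θ)`. Here `X = c Y² / 2` with `Y ∼ N(μ, σ²)`, and completing the square
gives the moment generating function of `Y²`.

Craig's formula itself follows by writing the Gaussian density at `t > 0` as an integral of
`t exp (-t² (1 + u²) / 2)` over `u > 0`, integrating first in `t`, substituting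
`u = tan θ`, and reflecting `θ ↦ π / 2 - θ`.
-/

open Set Filter ProbabilityTheory
open scoped NNReal Topology

section Substitutions

variable {E : Type*} [NormedAddCommGroup E] [NormedSpace ℝ E]

lemma integral_comp_arctan_Ioi_zero (f : ℝ → E) :
    ∫ u in Ioi (0 : ℝ), (1 + u ^ 2)⁻¹ • f (arctan u) = ∫ θ in (0 : ℝ)..(π / 2), f θ := by
  have image_arctan : arctan '' Ioi 0 = Ioo 0 (π / 2) := by
    ext θ
    constructor
    · rintro ⟨u, hu, rfl⟩
      exact ⟨arctan_pos.2 hu, arctan_lt_pi_div_two u⟩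
    · rintro ⟨hθ₀, hθ₁⟩
      exact ⟨tan θ, tan_pos_of_pos_of_lt_pi_div_two hθ₀ hθ₁, arctan_tan (by linarith) hθ₁⟩
  rw [intervalIntegral.integral_of_le (by positivity), integral_Ioc_eq_integral_Ioo, ← image_arctan,
    integral_image_eq_integral_abs_deriv_smul measurableSet_Ioi
      (fun u _ => (hasDerivAt_arctan u).hasDerivWithinAt) arctan_injective.injOn]
  refine setIntegral_congr_fun measurableSet_Ioi fun u _ => ?_
  have hu : 0 < 1 + u ^ 2 := by positivity
  simp only [one_div, abs_of_pos (inv_pos.2 hu)]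

lemma integral_comp_cos_eq_integral_comp_sin (f : ℝ → E) :
    ∫ θ in (0 : ℝ)..(π / 2), f (cos θ) = ∫ θ in (0 : ℝ)..(π / 2), f (sin θ) := by
  simpa [sin_pi_div_two_sub] using
    intervalIntegral.integral_comp_sub_left (a := 0) (b := π / 2) (fun θ => f (sin θ)) (π / 2)

lemma integral_Ioi_zero_add_comp_neg {f : ℝ → E} (hf : Integrable f) :
    ∫ y in Ioi (0 : ℝ), (f y + f (-y)) = ∫ y, f y := by
  rw [integral_add hf.integrableOn hf.comp_neg.integrableOn, integral_comp_neg_Ioi, neg_zero,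
    add_comm]
  exact intervalIntegral.integral_Iic_add_Ioi hf.integrableOn hf.integrableOn

end Substitutions

section CraigFormula

lemma integral_Ioi_mul_exp_neg_mul_sq {b : ℝ} (hb : 0 < b) (x : ℝ) :
    ∫ t in Ioi x, t * exp (-b * t ^ 2) = (2 * b)⁻¹ * exp (-b * x ^ 2) := by
  have hderiv (t : ℝ) :
      HasDerivAt (fun t => -(2 * b)⁻¹ * exp (-b * t ^ 2)) (t * exp (-b * t ^ 2)) t := by
    refine (((hasDerivAt_pow 2 t).const_mul (-b)).exp.const_mul (-(2 * b)⁻¹)).congr_deriv ?_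
    simp only [Nat.cast_ofNat, Nat.add_one_sub_one, pow_one]
    field_simp
  have hlim : Tendsto (fun t : ℝ => -(2 * b)⁻¹ * exp (-b * t ^ 2)) atTop (𝓝 0) := by
    have hbot : Tendsto (fun t : ℝ => -b * t ^ 2) atTop atBot :=
      (tendsto_pow_atTop two_ne_zero).const_mul_atTop_of_neg (neg_lt_zero.2 hb)
    simpa using (tendsto_exp_atBot.comp hbot).const_mul (-(2 * b)⁻¹)
  rw [integral_Ioi_of_hasDerivAt_of_tendsto' (fun t _ => hderiv t)
    (integrable_mul_exp_neg_mul_sq hb).integrableOn hlim]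
  ring

lemma integral_Ioi_zero_mul_exp_neg_one_add_sq {t : ℝ} (ht : 0 < t) :
    ∫ u in Ioi (0 : ℝ), t * exp (-((1 + u ^ 2) / 2) * t ^ 2) =
      π * ((1 / √(2 * π)) * exp (-t ^ 2 / 2)) := by
  have hsplit (u : ℝ) : t * exp (-((1 + u ^ 2) / 2) * t ^ 2) =
      t * exp (-t ^ 2 / 2) * exp (-(t ^ 2 / 2) * u ^ 2) := by
    rw [mul_assoc, ← exp_add]
    ring_nf
  have hsqrt : √(π / (t ^ 2 / 2)) = √(2 * π) / t := by
    rw [show π / (t ^ 2 / 2) = (2 * π) / t ^ 2 by field_simp, sqrt_div (by positivity),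
      sqrt_sq ht.le]
  simp_rw [hsplit]
  rw [integral_const_mul, integral_gaussian_Ioi, hsqrt]
  field_simp
  rw [sq_sqrt (by positivity)]

lemma integrable_mul_exp_neg_one_add_sq {x : ℝ} (hx : 0 ≤ x) :
    Integrable (fun p : ℝ × ℝ => p.1 * exp (-((1 + p.2 ^ 2) / 2) * p.1 ^ 2))
      ((volume.restrict (Ioi x)).prod (volume.restrict (Ioi 0))) := by
  have hcont : Continuous (fun p : ℝ × ℝ => p.1 * exp (-((1 + p.2 ^ 2) / 2) * p.1 ^ 2)) := by
    fun_prop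
  refine (integrable_prod_iff hcont.aestronglyMeasurable).2 ⟨?_, ?_⟩
  · filter_upwards [ae_restrict_mem measurableSet_Ioi] with t ht
    have ht : 0 < t := hx.trans_lt ht
    refine .of_integral_ne_zero ?_
    rw [integral_Ioi_zero_mul_exp_neg_one_add_sq ht]
    positivity
  · have hgauss : Integrable (fun t : ℝ => π * ((1 / √(2 * π)) * exp (-t ^ 2 / 2))) := by
      simp_rw [show ∀ t : ℝ, -t ^ 2 / 2 = -(1 / 2) * t ^ 2 by intro t; ring]
      exact ((integrable_exp_neg_mul_sq one_half_pos).const_mul _).const_mul _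
    refine hgauss.integrableOn.congr ?_
    filter_upwards [ae_restrict_mem measurableSet_Ioi] with t ht
    have ht : 0 < t := hx.trans_lt ht
    simp_rw [norm_of_nonneg (mul_nonneg ht.le (exp_nonneg _))]
    exact (integral_Ioi_zero_mul_exp_neg_one_add_sq ht).symm

lemma pi_mul_gaussQ_eq_integral_Ioi {x : ℝ} (hx : 0 ≤ x) :
    π * gaussQ x = ∫ u in Ioi (0 : ℝ), (1 + u ^ 2)⁻¹ * exp (-((1 + u ^ 2) / 2) * x ^ 2) := by
  calc π * gaussQ x
    _ = ∫ t in Ioi x, ∫ u in Ioi (0 : ℝ), t * exp (-((1 + u ^ 2) / 2) * t ^ 2) := by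
      rw [gaussQ, ← integral_const_mul]
      exact setIntegral_congr_fun measurableSet_Ioi fun t ht =>
        (integral_Ioi_zero_mul_exp_neg_one_add_sq (hx.trans_lt ht)).symm
    _ = ∫ u in Ioi (0 : ℝ), ∫ t in Ioi x, t * exp (-((1 + u ^ 2) / 2) * t ^ 2) :=
      integral_integral_swap (integrable_mul_exp_neg_one_add_sq hx)
    _ = ∫ u in Ioi (0 : ℝ), (1 + u ^ 2)⁻¹ * exp (-((1 + u ^ 2) / 2) * x ^ 2) := by
      congr with u
      rw [integral_Ioi_mul_exp_neg_mul_sq (by positivity), mul_div_cancel₀ _ two_ne_zero]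

/-- At `θ = 0` the integrand takes the junk value `1` instead of its limit (`0` when `0 < x`). -/
theorem gaussQ_eq_integral_exp_sin_sq {x : ℝ} (hx : 0 ≤ x) :
    gaussQ x = (1 / π) * ∫ θ in (0 : ℝ)..(π / 2), exp (-(1 / (2 * sin θ ^ 2)) * x ^ 2) := by
  have hcos : π * gaussQ x = ∫ θ in (0 : ℝ)..(π / 2), exp (-(1 / (2 * cos θ ^ 2)) * x ^ 2) := by
    rw [pi_mul_gaussQ_eq_integral_Ioi hx, ← integral_comp_arctan_Ioi_zero]
    congr with u
    rw [cos_sq_arctan, smul_eq_mul]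
    field_simp
  rw [← integral_comp_cos_eq_integral_comp_sin (fun s => exp (-(1 / (2 * s ^ 2)) * x ^ 2)), ← hcos]
  field_simp

end CraigFormula

section RandomArgument

variable {Ω : Type*} [MeasurableSpace Ω] {P : Measure Ω} {X : Ω → ℝ}

lemma gaussQ_sqrt_ae_eq_integral_exp (hX₀ : 0 ≤ᵐ[P] X) :
    (fun ω => gaussQ √(X ω)) =ᵐ[P]
      fun ω => (1 / π) * ∫ θ in (0 : ℝ)..(π / 2), exp (-(1 / (2 * sin θ ^ 2)) * X ω) := by
  filter_upwards [hX₀] with ω hω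
  rw [gaussQ_eq_integral_exp_sin_sq (sqrt_nonneg _), sq_sqrt hω]

variable [IsFiniteMeasure P]

lemma integrable_exp_neg_div_sin_sq_mul (hX : AEMeasurable X P) (hX₀ : 0 ≤ᵐ[P] X) (a b : ℝ) :
    Integrable (Function.uncurry fun θ ω => exp (-(1 / (2 * sin θ ^ 2)) * X ω))
      ((volume.restrict (uIoc a b)).prod P) := by
  have : IsFiniteMeasure (volume.restrict (uIoc a b)) := isFiniteMeasure_restrict_Ioc _ _
  have : AEMeasurable (fun p : ℝ × Ω => X p.2) ((volume.restrict (uIoc a b)).prod P) :=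
    hX.comp_snd
  refine .of_bound (by unfold Function.uncurry; fun_prop) 1 ?_
  filter_upwards [Measure.quasiMeasurePreserving_snd.ae hX₀] with p hp
  rw [Function.uncurry, norm_of_nonneg (exp_nonneg _), exp_le_one_iff, neg_mul, neg_nonpos]
  exact mul_nonneg (by positivity) hp

lemma integrable_gaussQ_sqrt (hX : AEMeasurable X P) (hX₀ : 0 ≤ᵐ[P] X) :
    Integrable (fun ω => gaussQ √(X ω)) P := by
  refine Integrable.congr ?_ (gaussQ_sqrt_ae_eq_integral_exp hX₀).symm
  simp_rw [intervalIntegral.integral_of_le pi_div_two_pos.le, ← uIoc_of_le pi_div_two_pos.le]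
  exact (integrable_exp_neg_div_sin_sq_mul hX hX₀ 0 (π / 2)).integral_prod_right.const_mul _

theorem integral_gaussQ_sqrt_eq_integral_mgf (hX : AEMeasurable X P) (hX₀ : 0 ≤ᵐ[P] X) :
    ∫ ω, gaussQ √(X ω) ∂P =
      (1 / π) * ∫ θ in (0 : ℝ)..(π / 2), mgf X P (-(1 / (2 * sin θ ^ 2))) := by
  rw [integral_congr_ae (gaussQ_sqrt_ae_eq_integral_exp hX₀), integral_const_mul,
    ← intervalIntegral_integral_swap (integrable_exp_neg_div_sin_sq_mul hX hX₀ 0 (π / 2))]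
  rfl

end RandomArgument

section SquaredGaussian

lemma gaussianPDFReal_mul_exp_mul_sq (μ : ℝ) (v : ℝ≥0) {t : ℝ} (ht : 2 * v * t < 1) (y : ℝ) :
    gaussianPDFReal μ v y * exp (t * y ^ 2) =
      √(1 / (1 - 2 * v * t)) * exp (t * μ ^ 2 / (1 - 2 * v * t)) *
        gaussianPDFReal (μ / (1 - 2 * v * t)) (v / (1 - 2 * v * t)).toNNReal y := by
  obtain rfl | hv := eq_or_ne v 0
  · simp
  have : (0 : ℝ) < v := by positivity
  have hd : 0 < 1 - 2 * v * t := by linarith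
  have hw : 0 ≤ v / (1 - 2 * v * t) := by positivity
  have hsqrt : √(2 * π * (v / (1 - 2 * v * t))) = √(2 * π * v) * √(1 / (1 - 2 * v * t)) := by
    rw [← sqrt_mul (by positivity)]
    ring_nf
  have hexp : -(y - μ) ^ 2 / (2 * v) + t * y ^ 2 = t * μ ^ 2 / (1 - 2 * v * t) +
      -(y - μ / (1 - 2 * v * t)) ^ 2 / (2 * (v / (1 - 2 * v * t))) := by
    field_simp
    ring
  rw [gaussianPDFReal, gaussianPDFReal, coe_toNNReal _ hw, hsqrt, mul_assoc, ← exp_add, hexp,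
    exp_add]
  field_simp

theorem mgf_sq_gaussianReal (μ : ℝ) (v : ℝ≥0) {t : ℝ} (ht : 2 * v * t < 1) :
    mgf (fun y => y ^ 2) (gaussianReal μ v) t =
      √(1 / (1 - 2 * v * t)) * exp (t * μ ^ 2 / (1 - 2 * v * t)) := by
  obtain rfl | hv := eq_or_ne v 0
  · simp [mgf]
  have hw : (v / (1 - 2 * v * t)).toNNReal ≠ 0 := by
    have : 0 < (v : ℝ) := by positivity
    exact (toNNReal_pos.2 (div_pos this (by linarith))).ne'
  simp_rw [mgf, integral_gaussianReal_eq_integral_smul hv, smul_eq_mul,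
    gaussianPDFReal_mul_exp_mul_sq μ v ht]
  rw [integral_const_mul, integral_gaussianPDFReal_eq_one _ hw, mul_one]

lemma mgf_half_mul_sq_gaussianReal (μ : ℝ) (v : ℝ≥0) {c s : ℝ} (hc : 0 ≤ c) (hs : 0 < s) :
    mgf (fun y => c / 2 * y ^ 2) (gaussianReal μ v) (-(1 / (2 * s))) =
      √(2 * s / (2 * s + c * v)) * exp (-(c * μ ^ 2) / (4 * s + 2 * c * v)) := by
  have hden : 1 - 2 * v * (c / 2 * -(1 / (2 * s))) = (2 * s + c * v) / (2 * s) := by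
    field_simp
    ring
  have hden_pos : 0 < (2 * s + c * v) / (2 * s) := by positivity
  rw [mgf_const_mul, mgf_sq_gaussianReal μ v (by linarith), hden, one_div_div]
  congr 2
  field_simp
  ring

variable {σ : ℝ}

lemma two_mul_mul_squaredGaussianPDF_sq (μ : ℝ) (hσ : σ ≠ 0) {y : ℝ} (hy : 0 < y) :
    2 * y * squaredGaussianPDF μ σ (y ^ 2) =
      gaussianPDFReal μ (.mk (σ ^ 2) (sq_nonneg σ)) y +
        gaussianPDFReal μ (.mk (σ ^ 2) (sq_nonneg σ)) (-y) := by
  rw [squaredGaussianPDF, gaussianPDFReal, gaussianPDFReal, NNReal.coe_mk, if_pos (by positivity),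
    sqrt_sq hy.le, sqrt_mul (by positivity), sqrt_sq hy.le]
  have hexp (s : ℝ) : exp (-(s - μ) ^ 2 / (2 * σ ^ 2)) =
      exp (-(s ^ 2 + μ ^ 2) / (2 * σ ^ 2)) * exp (μ * s / σ ^ 2) := by
    rw [← exp_add]
    congr 1
    field_simp
    ring
  rw [hexp, hexp, neg_sq, mul_neg]
  field_simp

theorem integral_squaredGaussianPDF_smul {E : Type*} [NormedAddCommGroup E] [NormedSpace ℝ E]
    (μ : ℝ) (hσ : σ ≠ 0) {g : ℝ → E}
    (hg : Integrable (fun y => g (y ^ 2)) (gaussianReal μ (.mk (σ ^ 2) (sq_nonneg σ)))) :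
    ∫ x in Ioi (0 : ℝ), squaredGaussianPDF μ σ x • g x =
      ∫ y, g (y ^ 2) ∂gaussianReal μ (.mk (σ ^ 2) (sq_nonneg σ)) := by
  set v : ℝ≥0 := .mk (σ ^ 2) (sq_nonneg σ)
  have hv : v ≠ 0 := by
    rw [← NNReal.coe_ne_zero]
    exact pow_ne_zero 2 hσ
  have hint : Integrable (fun y => gaussianPDFReal μ v y • g (y ^ 2)) := by
    rw [gaussianReal_of_var_ne_zero μ hv, integrable_withDensity_iff_integrable_smul'
      (measurable_gaussianPDF μ v) (ae_of_all _ fun _ => gaussianPDF_lt_top)] at hg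
    simpa only [toReal_gaussianPDF] using hg
  rw [integral_gaussianReal_eq_integral_smul hv, ← integral_Ioi_zero_add_comp_neg hint,
    ← integral_comp_rpow_Ioi_of_pos two_pos]
  refine setIntegral_congr_fun measurableSet_Ioi fun y hy => ?_
  norm_num only [rpow_one, rpow_two, neg_sq, smul_smul, ← add_smul]
  rw [two_mul_mul_squaredGaussianPDF_sq μ hσ hy]

end SquaredGaussian

theorem upep_integral_correct_antenna_detection (μ σ c : ℝ) (hσ : 0 < σ) (hc : 0 < c) :
    ∫ x in Set.Ioi (0:ℝ), squaredGaussianPDF μ σ x * gaussQ (Real.sqrt (c * x / 2)) =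
      (1 / π) * ∫ θ in (0:ℝ)..(π / 2),
        Real.sqrt (2 * Real.sin θ ^ 2 / (2 * Real.sin θ ^ 2 + c * σ ^ 2)) *
          Real.exp (-(c * μ ^ 2) / (4 * Real.sin θ ^ 2 + 2 * c * σ ^ 2)) := by
  set ν := gaussianReal μ (.mk (σ ^ 2) (sq_nonneg σ))
  have hX : AEMeasurable (fun y : ℝ => c / 2 * y ^ 2) ν := by fun_prop
  have hX₀ : 0 ≤ᵐ[ν] fun y : ℝ => c / 2 * y ^ 2 := ae_of_all _ fun y => by positivity
  simp_rw [mul_div_right_comm c]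
  calc ∫ x in Ioi (0 : ℝ), squaredGaussianPDF μ σ x * gaussQ √(c / 2 * x)
    _ = ∫ y, gaussQ √(c / 2 * y ^ 2) ∂ν :=
      integral_squaredGaussianPDF_smul μ hσ.ne' (integrable_gaussQ_sqrt hX hX₀)
    _ = (1 / π) * ∫ θ in (0 : ℝ)..(π / 2),
          mgf (fun y => c / 2 * y ^ 2) ν (-(1 / (2 * sin θ ^ 2))) :=
      integral_gaussQ_sqrt_eq_integral_mgf hX hX₀
    _ = _ := by
      congr 1
      refine intervalIntegral.integral_congr_ae (ae_of_all _ fun θ hθ => ?_)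
      rw [uIoc_of_le pi_div_two_pos.le] at hθ
      have hsin : 0 < sin θ := sin_pos_of_pos_of_lt_pi hθ.1 (by linarith [hθ.2, pi_pos])
      exact mgf_half_mul_sq_gaussianReal μ _ hc.le (by positivity)
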